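/- arXiv:1709.05025 — 2 statements merged into one kernel-verified Lean document; each statement's English description precedes it below -/
import Mathlib

section
/- Every element of the subgroup ⟨σ, τ, λ₃₀⟩ ⊆ GL(3,ℂ) maps the zero set {(x,y,z) ∈ ℂ³ : z³⁰ + F₃₀(x,y) = 0} onto itself; equivalently, the polynomial Z³⁰ + F₃₀(X,Y) is invariant up to a nonzero scalar under the linear substitution of variables by each of σ, τ, λ₃₀. -/
noncomputable section
open Matrix

def zeta5 : ℂ := Complex.exp (2 * Real.pi * Complex.I / 5)

def sqrt5 : ℂ := zeta5 - zeta5 ^ 2 - zeta5 ^ 3 + zeta5 ^ 4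

def alpha : Matrix (Fin 2) (Fin 2) ℂ := -(Matrix.of ![![zeta5 ^ 3, 0], ![0, zeta5 ^ 2]])
def beta : Matrix (Fin 2) (Fin 2) ℂ := Matrix.of ![![0, 1], ![-1, 0]]
def gamma : Matrix (Fin 2) (Fin 2) ℂ :=
  (zeta5 ^ 2 - zeta5 ^ 3)⁻¹ •
    Matrix.of ![![zeta5 + zeta5⁻¹, 1], ![1, -(zeta5 + zeta5⁻¹)]]

/-- The block-diagonal embedding of a `2 × 2` matrix into `GL(3)`, with last diagonal entry 1. -/
def emb (A : Matrix (Fin 2) (Fin 2) ℂ) : Matrix (Fin 3) (Fin 3) ℂ :=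
  Matrix.of ![![A 0 0, A 0 1, 0], ![A 1 0, A 1 1, 0], ![0, 0, 1]]

def alpha' : Matrix (Fin 3) (Fin 3) ℂ := emb alpha
def beta' : Matrix (Fin 3) (Fin 3) ℂ := emb beta
def gamma' : Matrix (Fin 3) (Fin 3) ℂ := emb gamma

def sigma : Matrix (Fin 3) (Fin 3) ℂ :=
  Matrix.of ![![(zeta5 - zeta5 ^ 4) / sqrt5, (zeta5 ^ 3 - zeta5 ^ 2) / sqrt5, 0],
    ![(zeta5 ^ 3 - zeta5 ^ 2) / sqrt5, -((zeta5 - zeta5 ^ 4) / sqrt5), 0],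
    ![0, 0, 1]]

def tau : Matrix (Fin 3) (Fin 3) ℂ := Matrix.diagonal ![zeta5, 1, 1]

def rho : Matrix (Fin 3) (Fin 3) ℂ := Matrix.diagonal ![zeta5 ^ 3, zeta5 ^ 2, 1]

/-- The subgroup of `GL(3, ℂ)` generated by the invertible matrices in `S`. -/
def gen3 (S : Set (Matrix (Fin 3) (Fin 3) ℂ)) : Subgroup (GL (Fin 3) ℂ) :=
  Subgroup.closure {g : GL (Fin 3) ℂ | (g : Matrix (Fin 3) (Fin 3) ℂ) ∈ S}

/-- `S(2,1) = ⟨α', β', γ'⟩`. -/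
def S21 : Subgroup (GL (Fin 3) ℂ) := gen3 {alpha', beta', gamma'}

abbrev SL25 := Matrix.SpecialLinearGroup (Fin 2) (ZMod 5)

open MvPolynomial

def lambda30 : Matrix (Fin 3) (Fin 3) ℂ :=
  Matrix.diagonal ![1, 1, Complex.exp (2 * Real.pi * Complex.I / 30)]

/-- `⟨σ, τ, λ₃₀⟩`. -/
def Gt30 : Subgroup (GL (Fin 3) ℂ) := gen3 {sigma, tau, lambda30}

/-- `G = Z³⁰ + F₃₀(X, Y)` with `X = X 0`, `Y = X 1`, `Z = X 2`. -/
def G30 : MvPolynomial (Fin 3) ℂ :=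
  X 2 ^ 30 +
    (X 0 ^ 30 + 522 * (X 0 ^ 25 * X 1 ^ 5 - X 0 ^ 5 * X 1 ^ 25)
      - 10005 * (X 0 ^ 20 * X 1 ^ 10 + X 0 ^ 10 * X 1 ^ 20) + X 1 ^ 30)

/-- The action of a `3 × 3` matrix on `ℂ[X, Y, Z]` by linear substitution of variables. -/
def act3 (A : Matrix (Fin 3) (Fin 3) ℂ) (P : MvPolynomial (Fin 3) ℂ) : MvPolynomial (Fin 3) ℂ :=
  aeval (fun i => C (A i 0) * X 0 + C (A i 1) * X 1 + C (A i 2) * X 2) P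

theorem F30_factor_aux {R : Type*} [CommRing R] (p q : R) :
    p ^ 6 + 522 * (p ^ 5 * q - p * q ^ 5) - 10005 * (p ^ 4 * q ^ 2 + p ^ 2 * q ^ 4) + q ^ 6
      = (p ^ 2 + q ^ 2) * ((p ^ 2 - q ^ 2) ^ 2 + 522 * (p * q) * (p ^ 2 - q ^ 2)
        - 10004 * (p * q) ^ 2) := by
  ring

theorem F30_W_aux {R : Type*} [CommRing R] (x y : R) :
    (-11*x^10 + 70*x^9*y - 180*x^8*y^2 + 360*x^7*y^3 - 210*x^6*y^4 + 504*x^5*y^5 + 210*x^4*y^6 + 360*x^3*y^7 + 180*x^2*y^8 + 70*x*y^9 + 11*y^10) ^ 2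
      + 522 * (x^10 + 5*x^9*y + 5*x^8*y^2 - 10*x^7*y^3 - 15*x^6*y^4 + 11*x^5*y^5 + 15*x^4*y^6 - 10*x^3*y^7 - 5*x^2*y^8 + 5*x*y^9 - y^10)
        * (-11*x^10 + 70*x^9*y - 180*x^8*y^2 + 360*x^7*y^3 - 210*x^6*y^4 + 504*x^5*y^5 + 210*x^4*y^6 + 360*x^3*y^7 + 180*x^2*y^8 + 70*x*y^9 + 11*y^10)
      - 10004 * (x^10 + 5*x^9*y + 5*x^8*y^2 - 10*x^7*y^3 - 15*x^6*y^4 + 11*x^5*y^5 + 15*x^4*y^6 - 10*x^3*y^7 - 5*x^2*y^8 + 5*x*y^9 - y^10) ^ 2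
      = -15625 * (x^20 + 6*x^19*y + 18*x^18*y^2 + 24*x^17*y^3 - 78*x^16*y^4 - 198*x^15*y^5 - 6*x^14*y^6 + 372*x^13*y^7 - 54*x^12*y^8 - 402*x^11*y^9 + 74*x^10*y^10 + 402*x^9*y^11 - 54*x^8*y^12 - 372*x^7*y^13 - 6*x^6*y^14 + 198*x^5*y^15 - 78*x^4*y^16 - 24*x^3*y^17 + 18*x^2*y^18 - 6*x*y^19 + y^20) := by
  ring

theorem F30_SW_aux {R : Type*} [CommRing R] (x y : R) :
    (x^10 - 6*x^9*y + 18*x^8*y^2 - 24*x^7*y^3 + 42*x^6*y^4 + 42*x^4*y^6 + 24*x^3*y^7 + 18*x^2*y^8 + 6*x*y^9 + y^10)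
      * (x^20 + 6*x^19*y + 18*x^18*y^2 + 24*x^17*y^3 - 78*x^16*y^4 - 198*x^15*y^5 - 6*x^14*y^6 + 372*x^13*y^7 - 54*x^12*y^8 - 402*x^11*y^9 + 74*x^10*y^10 + 402*x^9*y^11 - 54*x^8*y^12 - 372*x^7*y^13 - 6*x^6*y^14 + 198*x^5*y^15 - 78*x^4*y^16 - 24*x^3*y^17 + 18*x^2*y^18 - 6*x*y^19 + y^20)
      = x ^ 30 + 522 * (x ^ 25 * y ^ 5 - x ^ 5 * y ^ 25)
        - 10005 * (x ^ 20 * y ^ 10 + x ^ 10 * y ^ 20) + y ^ 30 := by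
  ring

theorem F30_key {R : Type*} [CommRing R] (x y g a : R) (hg : g ^ 2 = 1 - g)
    (ha : a ^ 2 * (2 - g) = -1) :
    (a * x + -(g * a) * y) ^ 30
      + 522 * ((a * x + -(g * a) * y) ^ 25 * (-(g * a) * x + -a * y) ^ 5
        - (a * x + -(g * a) * y) ^ 5 * (-(g * a) * x + -a * y) ^ 25)
      - 10005 * ((a * x + -(g * a) * y) ^ 20 * (-(g * a) * x + -a * y) ^ 10
        + (a * x + -(g * a) * y) ^ 10 * (-(g * a) * x + -a * y) ^ 20)
      + (-(g * a) * x + -a * y) ^ 30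
      = x ^ 30 + 522 * (x ^ 25 * y ^ 5 - x ^ 5 * y ^ 25)
        - 10005 * (x ^ 20 * y ^ 10 + x ^ 10 * y ^ 20) + y ^ 30 := by
  have hg3 : g ^ 3 = 2 * g - 1 := by linear_combination (g - 1) * hg
  have hg4 : g ^ 4 = 2 - 3 * g := by linear_combination g * hg3 + 2 * hg
  have hg5 : g ^ 5 = 5 * g - 3 := by linear_combination g * hg4 - 3 * hg
  have hg7 : g ^ 7 = 13 * g - 8 := by linear_combination g ^ 2 * hg5 + 5 * hg3 - 3 * hg
  have hg14 : g ^ 14 = 233 - 377 * g := by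
    linear_combination (g ^ 7 + 13 * g - 8) * hg7 + 169 * hg
  have hk : (2 - g) ^ 15 = 78125 * (843 - 1364 * g) := by
    have h2 : (2 - g) ^ 2 = 5 * g ^ 2 := by linear_combination (-4) * hg
    calc (2 - g) ^ 15 = ((2 - g) ^ 2) ^ 7 * (2 - g) := by ring
      _ = 78125 * g ^ 14 * (2 - g) := by rw [h2]; ring
      _ = _ := by rw [hg14]; linear_combination 78125 * 377 * hg
  have hP : (x - g * y) ^ 5 = (x^5 + 10*x^3*y^2 + 10*x^2*y^3 + 10*x*y^4 + 3*y^5) + g * (-5*x^4*y - 10*x^3*y^2 - 20*x^2*y^3 - 15*x*y^4 - 5*y^5) := by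
    linear_combination 10 * x ^ 3 * y ^ 2 * hg - 10 * x ^ 2 * y ^ 3 * hg3
      + 5 * x * y ^ 4 * hg4 - y ^ 5 * hg5
  have hQ : (-(g * x + y)) ^ 5 = (3*x^5 - 10*x^4*y + 10*x^3*y^2 - 10*x^2*y^3 - y^5) + g * (-5*x^5 + 15*x^4*y - 20*x^3*y^2 + 10*x^2*y^3 - 5*x*y^4) := by
    linear_combination -(10 * y ^ 3 * x ^ 2 * hg) - 10 * y ^ 2 * x ^ 3 * hg3
      - 5 * y * x ^ 4 * hg4 - x ^ 5 * hg5
  have hS : ((x - g * y) ^ 5) ^ 2 + ((-(g * x + y)) ^ 5) ^ 2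
      = (35 - 55 * g) * (x^10 - 6*x^9*y + 18*x^8*y^2 - 24*x^7*y^3 + 42*x^6*y^4 + 42*x^4*y^6 + 24*x^3*y^7 + 18*x^2*y^8 + 6*x*y^9 + y^10) := by
    rw [hP, hQ]
    linear_combination ((-5*x^4*y - 10*x^3*y^2 - 20*x^2*y^3 - 15*x*y^4 - 5*y^5) ^ 2
      + (-5*x^5 + 15*x^4*y - 20*x^3*y^2 + 10*x^2*y^3 - 5*x*y^4) ^ 2) * hg
  have hD : ((x - g * y) ^ 5) ^ 2 - ((-(g * x + y)) ^ 5) ^ 2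
      = (3 - 5 * g) * (-11*x^10 + 70*x^9*y - 180*x^8*y^2 + 360*x^7*y^3 - 210*x^6*y^4 + 504*x^5*y^5 + 210*x^4*y^6 + 360*x^3*y^7 + 180*x^2*y^8 + 70*x*y^9 + 11*y^10) := by
    rw [hP, hQ]
    linear_combination ((-5*x^4*y - 10*x^3*y^2 - 20*x^2*y^3 - 15*x*y^4 - 5*y^5) ^ 2
      - (-5*x^5 + 15*x^4*y - 20*x^3*y^2 + 10*x^2*y^3 - 5*x*y^4) ^ 2) * hg
  have hM : (x - g * y) ^ 5 * (-(g * x + y)) ^ 5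
      = (3 - 5 * g) * (x^10 + 5*x^9*y + 5*x^8*y^2 - 10*x^7*y^3 - 15*x^6*y^4 + 11*x^5*y^5 + 15*x^4*y^6 - 10*x^3*y^7 - 5*x^2*y^8 + 5*x*y^9 - y^10) := by
    rw [hP, hQ]
    linear_combination ((-5*x^4*y - 10*x^3*y^2 - 20*x^2*y^3 - 15*x*y^4 - 5*y^5)
      * (-5*x^5 + 15*x^4*y - 20*x^3*y^2 + 10*x^2*y^3 - 5*x*y^4)) * hg
  have hW := F30_W_aux x y
  have hSW := F30_SW_aux x y
  have hF := F30_factor_aux ((x - g * y) ^ 5) ((-(g * x + y)) ^ 5)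
  rw [hS, hD, hM] at hF
  generalize hs : x^10 - 6*x^9*y + 18*x^8*y^2 - 24*x^7*y^3 + 42*x^6*y^4 + 42*x^4*y^6 + 24*x^3*y^7 + 18*x^2*y^8 + 6*x*y^9 + y^10 = s at hF hSW
  generalize hd : -11*x^10 + 70*x^9*y - 180*x^8*y^2 + 360*x^7*y^3 - 210*x^6*y^4 + 504*x^5*y^5 + 210*x^4*y^6 + 360*x^3*y^7 + 180*x^2*y^8 + 70*x*y^9 + 11*y^10 = d at hF hW
  generalize hm : x^10 + 5*x^9*y + 5*x^8*y^2 - 10*x^7*y^3 - 15*x^6*y^4 + 11*x^5*y^5 + 15*x^4*y^6 - 10*x^3*y^7 - 5*x^2*y^8 + 5*x*y^9 - y^10 = m at hF hW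
  generalize hw : x^20 + 6*x^19*y + 18*x^18*y^2 + 24*x^17*y^3 - 78*x^16*y^4 - 198*x^15*y^5 - 6*x^14*y^6 + 372*x^13*y^7 - 54*x^12*y^8 - 402*x^11*y^9 + 74*x^10*y^10 + 402*x^9*y^11 - 54*x^8*y^12 - 372*x^7*y^13 - 6*x^6*y^14 + 198*x^5*y^15 - 78*x^4*y^16 - 24*x^3*y^17 + 18*x^2*y^18 - 6*x*y^19 + y^20 = w at hW hSW
  clear hS hD hM hP hQ hs hd hm hw
  have ha15 : a ^ 30 * (2 - g) ^ 15 = -1 := by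
    calc a ^ 30 * (2 - g) ^ 15 = (a ^ 2 * (2 - g)) ^ 15 := by ring
      _ = -1 := by rw [ha]; norm_num
  rw [hk] at ha15
  have hF2 : (35 - 55 * g) * (((3 - 5 * g) * d) ^ 2 + 522 * ((3 - 5 * g) * m) * ((3 - 5 * g) * d)
      - 10004 * ((3 - 5 * g) * m) ^ 2) = -(78125 * (843 - 1364 * g)) * w := by
    have h9 : (35 - 55 * g) * (3 - 5 * g) ^ 2 = 5 * (843 - 1364 * g) := by
      linear_combination (35 * 25 + 55 * 30) * hg - 55 * 25 * hg3
    linear_combination (d ^ 2 + 522 * m * d - 10004 * m ^ 2) * h9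
      + 5 * (843 - 1364 * g) * hW
  have e1 : a * x + -(g * a) * y = a * (x - g * y) := by ring
  have e2 : -(g * a) * x + -a * y = a * (-(g * x + y)) := by ring
  rw [e1, e2, ← hSW]
  generalize x - g * y = p at hF ⊢
  generalize -(g * x + y) = q at hF ⊢
  linear_combination a ^ 30 * hF + a ^ 30 * s * hF2 - s * w * ha15

theorem zeta5_pow : zeta5 ^ 5 = 1 := by
  rw [zeta5, ← Complex.exp_nat_mul, ← Complex.exp_two_pi_mul_I]
  congr 1
  push_cast
  ring

theorem zeta5_sum : zeta5 ^ 4 + zeta5 ^ 3 + zeta5 ^ 2 + zeta5 + 1 = 0 := by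
  have h := (Complex.isPrimitiveRoot_exp 5 (by norm_num)).geom_sum_eq_zero (by norm_num)
  simp only [Finset.sum_range_succ, Finset.sum_range_zero] at h
  have e : zeta5 = Complex.exp (2 * Real.pi * Complex.I / (5 : ℕ)) := by simp [zeta5]
  rw [← e] at h
  linear_combination h

theorem sqrt5_sq : sqrt5 ^ 2 = 5 := by
  have h := zeta5_sum
  have h5 := zeta5_pow
  unfold sqrt5
  generalize zeta5 = z at *
  grind

theorem sqrt5_ne : sqrt5 ≠ 0 := by
  intro h
  have := sqrt5_sq
  rw [h] at this
  norm_num at this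

theorem sigma_param : ∃ g a : ℂ, g ^ 2 = 1 - g ∧ a ^ 2 * (2 - g) = -1 ∧
    (zeta5 - zeta5 ^ 4) / sqrt5 = a ∧ (zeta5 ^ 3 - zeta5 ^ 2) / sqrt5 = -(g * a) := by
  have h := zeta5_sum
  have h5 := zeta5_pow
  have hs := sqrt5_sq
  have hn := sqrt5_ne
  refine ⟨zeta5 + zeta5 ^ 4, (zeta5 - zeta5 ^ 4) / sqrt5, ?_, ?_, rfl, ?_⟩
  · generalize zeta5 = z at *
    grind
  · rw [div_pow, hs]
    generalize zeta5 = z at *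
    grind
  · field_simp
    generalize zeta5 = z at *
    grind

theorem act_sigma : act3 sigma G30 = G30 := by
  obtain ⟨g, a, hg, ha, e1, e2⟩ := sigma_param
  have hgC : (C g : MvPolynomial (Fin 3) ℂ) ^ 2 = 1 - C g := by
    rw [← C_pow, hg]; simp
  have haC : (C a : MvPolynomial (Fin 3) ℂ) ^ 2 * (2 - C g) = -1 := by
    have : (C (a ^ 2 * (2 - g)) : MvPolynomial (Fin 3) ℂ) = C (-1) := by rw [ha]
    have h2 : (C 2 : MvPolynomial (Fin 3) ℂ) = 2 := map_ofNat C 2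
    simpa [h2] using this
  have key := F30_key (X 0) (X 1) (C g : MvPolynomial (Fin 3) ℂ) (C a) hgC haC
  unfold act3 G30
  simp only [map_add, map_sub, map_mul, map_pow, aeval_X, map_ofNat]
  simp only [sigma, e1, e2, Matrix.of_apply, Matrix.cons_val]
  simp only [map_neg, map_mul, map_zero, map_one, zero_mul, one_mul, zero_add, add_zero]
  rw [key]

theorem act_tau : act3 tau G30 = G30 := by
  have hz : (C zeta5 : MvPolynomial (Fin 3) ℂ) ^ 5 = 1 := by
    rw [← C_pow, zeta5_pow]; simp
  have h10 : (C zeta5 : MvPolynomial (Fin 3) ℂ) ^ 10 = 1 := by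
    rw [show 10 = 5 * 2 by norm_num, pow_mul, hz, one_pow]
  have h20 : (C zeta5 : MvPolynomial (Fin 3) ℂ) ^ 20 = 1 := by
    rw [show 20 = 5 * 4 by norm_num, pow_mul, hz, one_pow]
  have h25 : (C zeta5 : MvPolynomial (Fin 3) ℂ) ^ 25 = 1 := by
    rw [show 25 = 5 * 5 by norm_num, pow_mul, hz, one_pow]
  have h30 : (C zeta5 : MvPolynomial (Fin 3) ℂ) ^ 30 = 1 := by
    rw [show 30 = 5 * 6 by norm_num, pow_mul, hz, one_pow]
  unfold act3 G30
  simp only [map_add, map_sub, map_mul, map_pow, aeval_X, map_ofNat]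
  simp [tau, mul_pow, hz, h10, h20, h25, h30]

theorem act_lambda : act3 lambda30 G30 = G30 := by
  have h0 : Complex.exp (2 * Real.pi * Complex.I / 30) ^ 30 = 1 := by
    rw [← Complex.exp_nat_mul, ← Complex.exp_two_pi_mul_I]
    congr 1
    push_cast
    ring
  have hz : (C (Complex.exp (2 * Real.pi * Complex.I / 30)) : MvPolynomial (Fin 3) ℂ) ^ 30 = 1 := by
    rw [← C_pow, h0]; simp
  unfold act3 G30
  simp only [map_add, map_sub, map_mul, map_pow, aeval_X, map_ofNat]
  generalize hc : Complex.exp (2 * Real.pi * Complex.I / 30) = c at hz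
  simp [lambda30, mul_pow, hc, hz]

theorem act_gen (A : Matrix (Fin 3) (Fin 3) ℂ)
    (hA : A ∈ ({sigma, tau, lambda30} : Set (Matrix (Fin 3) (Fin 3) ℂ))) :
    act3 A G30 = G30 := by
  rcases hA with rfl | rfl | rfl
  · exact act_sigma
  · exact act_tau
  · exact act_lambda

theorem eval_act3 (A : Matrix (Fin 3) (Fin 3) ℂ) (P : MvPolynomial (Fin 3) ℂ) (v : Fin 3 → ℂ) :
    eval v (act3 A P) = eval (A.mulVec v) P := by
  unfold act3
  induction P using MvPolynomial.induction_on with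
  | C r => simp
  | add p q hp hq => simp only [map_add, hp, hq]
  | mul_X p i hp =>
    simp only [map_mul, hp, aeval_X, eval_X]
    simp [Matrix.mulVec, dotProduct, Fin.sum_univ_three]

theorem eval_Gt30 (g : GL (Fin 3) ℂ) (hg : g ∈ Gt30) : ∀ v : Fin 3 → ℂ,
    eval ((g : Matrix (Fin 3) (Fin 3) ℂ).mulVec v) G30 = eval v G30 := by
  unfold Gt30 gen3 at hg
  induction hg using Subgroup.closure_induction with
  | mem x hx => intro v; rw [← eval_act3, act_gen _ hx]
  | one => intro v; simp
  | mul x y _ _ hx hy =>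
    intro v
    rw [Units.val_mul, ← Matrix.mulVec_mulVec, hx, hy]
  | inv x _ hx =>
    intro v
    rw [← hx, Matrix.mulVec_mulVec, ← Units.val_mul, mul_inv_cancel, Units.val_one,
      Matrix.one_mulVec]

theorem stmt13 :
    (∀ g ∈ Gt30,
      (fun v => ((g : GL (Fin 3) ℂ) : Matrix (Fin 3) (Fin 3) ℂ).mulVec v) ''
          {v : Fin 3 → ℂ | eval v G30 = 0} = {v : Fin 3 → ℂ | eval v G30 = 0}) ∧
    (∀ A ∈ ({sigma, tau, lambda30} : Set (Matrix (Fin 3) (Fin 3) ℂ)),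
      ∃ c : ℂ, c ≠ 0 ∧ act3 A G30 = C c * G30) := by
  refine ⟨?_, fun A hA => ⟨1, one_ne_zero, by rw [act_gen A hA, C_1, one_mul]⟩⟩
  intro g hg
  ext w
  constructor
  · rintro ⟨v, hv, rfl⟩
    simp only [Set.mem_ofPred_eq] at hv ⊢
    rw [eval_Gt30 g hg, hv]
  · intro hw
    refine ⟨((g⁻¹ : GL (Fin 3) ℂ) : Matrix (Fin 3) (Fin 3) ℂ).mulVec w, ?_, ?_⟩
    · simp only [Set.mem_ofPred_eq] at hw ⊢
      rw [eval_Gt30 _ (inv_mem hg), hw]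
    · simp only
      rw [Matrix.mulVec_mulVec, ← Units.val_mul, mul_inv_cancel, Units.val_one,
        Matrix.one_mulVec]
end
end

section
/- Let Q be the quotient of the subgroup ⟨S(2,1), diag(1,1,i)⟩ ⊆ GL(3,ℂ) by its central subgroup ⟨−I₃⟩. The map δ : Q → {±1} induced by sending a matrix with lower-right 2×2 block zero off the third row/column and (3,3)-entry a to a² is a well-defined surjective group homomorphism whose kernel is isomorphic to SL(2,5), and δ admits a group-theoretic section sending −1 to the class of the matrix [[0,1,0],[−1,0,0],[0,0,i]]. Consequently there exists a homomorphism φ : ℤ/2 → Aut(SL(2,5)) with Q ≅ SL(2,5) ⋊_φ ℤ/2. -/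
noncomputable section
open Matrix

/-- `T = ⟨S(2,1), diag(1,1,i)⟩`. -/
def T : Subgroup (GL (Fin 3) ℂ) := S21 ⊔ gen3 {Matrix.diagonal ![1, 1, Complex.I]}

/-- The central subgroup `⟨-I₃⟩` of `T`. -/
def N : Subgroup T :=
  Subgroup.closure {t : T | ((t : GL (Fin 3) ℂ) : Matrix (Fin 3) (Fin 3) ℂ) = -1}

lemma N_le_center : N ≤ Subgroup.center T := by
  rw [N, Subgroup.closure_le]
  intro t ht
  rw [SetLike.mem_coe, Subgroup.mem_center_iff]
  intro g
  refine Subtype.ext (Units.ext ?_)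
  show ((g : GL (Fin 3) ℂ) : Matrix (Fin 3) (Fin 3) ℂ) * ((t : GL (Fin 3) ℂ) : Matrix (Fin 3) (Fin 3) ℂ)
      = ((t : GL (Fin 3) ℂ) : Matrix (Fin 3) (Fin 3) ℂ) * ((g : GL (Fin 3) ℂ) : Matrix (Fin 3) (Fin 3) ℂ)
  rw [ht]
  simp

instance : N.Normal := by
  constructor
  intro n hn g
  have hc := Subgroup.mem_center_iff.mp (N_le_center hn) g
  rw [hc, mul_assoc, mul_inv_cancel, mul_one]
  exact hn

/-- `Q = ⟨S(2,1), diag(1,1,i)⟩ / ⟨-I₃⟩`. -/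
abbrev Q := T ⧸ N

/-! ### Integer model of the Weil representation of `SL(2,5)` -/

abbrev Z4 := ℤ × ℤ × ℤ × ℤ

def zadd (p q : Z4) : Z4 := (p.1 + q.1, p.2.1 + q.2.1, p.2.2.1 + q.2.2.1, p.2.2.2 + q.2.2.2)
def zsc (k : ℤ) (p : Z4) : Z4 := (k * p.1, k * p.2.1, k * p.2.2.1, k * p.2.2.2)
def zmk5 (a b c d e : ℤ) : Z4 := (a - e, b - e, c - e, d - e)
def zmul (p q : Z4) : Z4 :=
  zmk5 (p.1 * q.1 + p.2.2.1 * q.2.2.2 + p.2.2.2 * q.2.2.1)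
    (p.1 * q.2.1 + p.2.1 * q.1 + p.2.2.2 * q.2.2.2)
    (p.1 * q.2.2.1 + p.2.1 * q.2.1 + p.2.2.1 * q.1)
    (p.1 * q.2.2.2 + p.2.1 * q.2.2.1 + p.2.2.1 * q.2.1 + p.2.2.2 * q.1)
    (p.2.1 * q.2.2.2 + p.2.2.1 * q.2.2.1 + p.2.2.2 * q.2.1)

def zpw (k : ZMod 5) : Z4 :=
  if k = 0 then (1, 0, 0, 0) else if k = 1 then (0, 1, 0, 0) else if k = 2 then (0, 0, 1, 0)
  else if k = 3 then (0, 0, 0, 1) else (-1, -1, -1, -1)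

def chi5 (c : ZMod 5) : ℤ := if c = 1 ∨ c = 4 then 1 else -1

/-- Kernel of the Weil representation (times 5). -/
def wk (a b c d x y : ZMod 5) : Z4 :=
  if c = 0 then
    if a * x = y then zsc (5 * chi5 a) (zpw (4 * a * b * x * x)) else (0, 0, 0, 0)
  else zsc (chi5 c) (zmul (-1, 0, -2, -2) (zpw (4 * (c * c * c) * (a * x * x - 2 * x * y + d * y * y))))

def wo (a b c d x y : ZMod 5) : Z4 := zadd (wk a b c d x y) (zsc (-1) (wk a b c d x (-y)))

abbrev M4 := Z4 × Z4 × Z4 × Z4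

def wM (a b c d : ZMod 5) : M4 :=
  (wo a b c d 1 1, zsc (-1) (wo a b c d 1 2), zsc (-1) (wo a b c d 2 1), wo a b c d 2 2)

def mmul (A B : M4) : M4 :=
  (zadd (zmul A.1 B.1) (zmul A.2.1 B.2.2.1),
   zadd (zmul A.1 B.2.1) (zmul A.2.1 B.2.2.2),
   zadd (zmul A.2.2.1 B.1) (zmul A.2.2.2 B.2.2.1),
   zadd (zmul A.2.2.1 B.2.1) (zmul A.2.2.2 B.2.2.2))

def msc (k : ℤ) (A : M4) : M4 := (zsc k A.1, zsc k A.2.1, zsc k A.2.2.1, zsc k A.2.2.2)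

instance instDecZ4 : DecidableEq Z4 := inferInstance
instance instDecM4 : DecidableEq M4 := inferInstance

lemma chk_u : ∀ a b c d : ZMod 5, a * d - b * c = 1 →
    mmul (wM 4 3 0 4) (wM a b c d) =
      msc 5 (wM (4 * a + 3 * c) (4 * b + 3 * d) (0 * a + 4 * c) (0 * b + 4 * d)) := by
  decide +kernel

lemma chk_v : ∀ a b c d : ZMod 5, a * d - b * c = 1 →
    mmul (wM 2 0 0 3) (wM a b c d) =
      msc 5 (wM (2 * a + 0 * c) (2 * b + 0 * d) (0 * a + 3 * c) (0 * b + 3 * d)) := by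
  decide +kernel

lemma chk_w : ∀ a b c d : ZMod 5, a * d - b * c = 1 →
    mmul (wM 0 1 4 0) (wM a b c d) =
      msc 5 (wM (0 * a + 1 * c) (0 * b + 1 * d) (4 * a + 0 * c) (4 * b + 0 * d)) := by
  decide +kernel

lemma chk_inj : ∀ a b c d : ZMod 5, a * d - b * c = 1 → wM a b c d = wM 1 0 0 1 →
    a = 1 ∧ b = 0 ∧ c = 0 ∧ d = 1 := by
  decide +kernel

/-! ### Evaluation in `ℂ` -/

def ev (p : Z4) : ℂ := p.1 + p.2.1 * zeta5 + p.2.2.1 * zeta5 ^ 2 + p.2.2.2 * zeta5 ^ 3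

lemma zeta5_prim : IsPrimitiveRoot zeta5 5 := by
  have := Complex.isPrimitiveRoot_exp 5 (by norm_num)
  simpa [zeta5] using this

lemma zeta5_pow4 : zeta5 ^ 4 = -1 - zeta5 - zeta5 ^ 2 - zeta5 ^ 3 := by
  have := zeta5_prim.geom_sum_eq_zero (by norm_num)
  simp [Finset.sum_range_succ] at this
  linear_combination this

lemma zeta5_inv : zeta5⁻¹ = -1 - zeta5 - zeta5 ^ 2 - zeta5 ^ 3 := by
  rw [← zeta5_pow4]
  have h := zeta5_prim.pow_eq_one
  refine inv_eq_of_mul_eq_one_right ?_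
  rw [← h]; ring

lemma ev_add (p q : Z4) : ev (zadd p q) = ev p + ev q := by
  simp only [ev, zadd]; push_cast; ring

lemma ev_sc (k : ℤ) (p : Z4) : ev (zsc k p) = k * ev p := by
  simp only [ev, zsc]; push_cast; ring

lemma ev_mul (p q : Z4) : ev (zmul p q) = ev p * ev q := by
  obtain ⟨p0, p1, p2, p3⟩ := p
  obtain ⟨q0, q1, q2, q3⟩ := q
  simp only [ev, zmul, zmk5]
  push_cast
  have h4 := zeta5_pow4
  have h5 : zeta5 ^ 5 = 1 := zeta5_prim.pow_eq_one
  have h6 : zeta5 ^ 6 = zeta5 := by rw [pow_succ, h5, one_mul]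
  linear_combination (-(p1 * q3 + p2 * q2 + p3 * q1 : ℂ)) * h4 - (p2 * q3 + p3 * q2 : ℂ) * h5
    - (p3 * q3 : ℂ) * h6

lemma ev_inj {p q : Z4} (h : ev p = ev q) : p = q := by
  obtain ⟨p0, p1, p2, p3⟩ := p
  obtain ⟨q0, q1, q2, q3⟩ := q
  have hli := linearIndependent_pow (K := ℚ) zeta5
  have hdeg : (minpoly ℚ zeta5).natDegree = 4 := by
    rw [← Polynomial.cyclotomic_eq_minpoly_rat zeta5_prim (by norm_num),
      Polynomial.natDegree_cyclotomic]
    decide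
  rw [hdeg] at hli
  rw [Fintype.linearIndependent_iff] at hli
  have := hli ![(p0 - q0 : ℚ), p1 - q1, p2 - q2, p3 - q3] (by
    simp [Fin.sum_univ_four, Algebra.smul_def]
    simp only [ev] at h
    linear_combination h)
  have h0 := this 0
  have h1 := this 1
  have h2 := this 2
  have h3 := this 3
  simp [sub_eq_zero] at h0 h1 h2 h3
  simp [h0, h1, h2, h3]

def evM (A : M4) : Matrix (Fin 2) (Fin 2) ℂ :=
  !![ev A.1, ev A.2.1; ev A.2.2.1, ev A.2.2.2]

lemma evM_mul (A B : M4) : evM (mmul A B) = evM A * evM B := by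
  ext i j; fin_cases i <;> fin_cases j <;> simp [evM, mmul, ev_add, ev_mul, Matrix.mul_apply]

lemma evM_sc (k : ℤ) (A : M4) : evM (msc k A) = (k : ℂ) • evM A := by
  ext i j; fin_cases i <;> fin_cases j <;> simp [evM, msc, ev_sc]

lemma evM_inj {A B : M4} (h : evM A = evM B) : A = B := by
  obtain ⟨a, b, c, d⟩ := A
  obtain ⟨a', b', c', d'⟩ := B
  have h0 := ev_inj (congrFun (congrFun h 0) 0)
  have h1 := ev_inj (congrFun (congrFun h 0) 1)
  have h2 := ev_inj (congrFun (congrFun h 1) 0)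
  have h3 := ev_inj (congrFun (congrFun h 1) 1)
  simp_all

/-! ### The representation -/

def wG (x : SL25) : M4 := wM (x.1 0 0) (x.1 0 1) (x.1 1 0) (x.1 1 1)

def fm (x : SL25) : Matrix (Fin 2) (Fin 2) ℂ := (5 : ℂ)⁻¹ • evM (wG x)

lemma sl_det (x : SL25) : x.1 0 0 * x.1 1 1 - x.1 0 1 * x.1 1 0 = 1 := by
  have := x.2; rwa [Matrix.det_fin_two] at this

def gu : SL25 := ⟨!![4, 3; 0, 4], by decide⟩
def gv : SL25 := ⟨!![2, 0; 0, 3], by decide⟩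
def gw : SL25 := ⟨!![0, 1; 4, 0], by decide⟩

lemma fm_one : fm 1 = 1 := by
  have h : wG 1 = ((5, 0, 0, 0), (0, 0, 0, 0), (0, 0, 0, 0), (5, 0, 0, 0)) := by decide +kernel
  ext i j
  fin_cases i <;> fin_cases j <;> simp [fm, h, evM, ev]

lemma fm_mul_of {g x : SL25} (h : mmul (wG g) (wG x) = msc 5 (wG (g * x))) :
    fm (g * x) = fm g * fm x := by
  have h2 := congrArg evM h
  rw [evM_mul, evM_sc] at h2
  simp only [fm, Matrix.smul_mul, Matrix.mul_smul, h2, smul_smul]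
  norm_num

lemma fm_gu (x : SL25) : fm (gu * x) = fm gu * fm x := by
  refine fm_mul_of (?_ : _ = msc 5 (wG _))
  have := chk_u _ _ _ _ (sl_det x)
  simp only [wG]
  rw [show (gu * x).1 = !![4, 3; 0, 4] * x.1 from rfl]
  simpa [gu, Matrix.mul_apply, Fin.sum_univ_two] using this

lemma fm_gv (x : SL25) : fm (gv * x) = fm gv * fm x := by
  refine fm_mul_of (?_ : _ = msc 5 (wG _))
  have := chk_v _ _ _ _ (sl_det x)
  simp only [wG]
  rw [show (gv * x).1 = !![2, 0; 0, 3] * x.1 from rfl]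
  simpa [gv, Matrix.mul_apply, Fin.sum_univ_two] using this

lemma fm_gw (x : SL25) : fm (gw * x) = fm gw * fm x := by
  refine fm_mul_of (?_ : _ = msc 5 (wG _))
  have := chk_w _ _ _ _ (sl_det x)
  simp only [wG]
  rw [show (gw * x).1 = !![0, 1; 4, 0] * x.1 from rfl]
  simpa [gw, Matrix.mul_apply, Fin.sum_univ_two] using this

/-! ### Generation of `SL(2,5)` -/

def gU (t : ZMod 5) : SL25 := ⟨!![1, t; 0, 1], by simp [Matrix.det_fin_two]⟩

def gD (s : ZMod 5) (hs : s ≠ 0) : SL25 := ⟨!![s, 0; 0, s * s * s], by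
  revert s; decide⟩

def SM : Submonoid SL25 := Submonoid.closure {gu, gv, gw}

lemma gu_mem : gu ∈ SM := Submonoid.subset_closure (by simp)
lemma gv_mem : gv ∈ SM := Submonoid.subset_closure (by simp)
lemma gw_mem : gw ∈ SM := Submonoid.subset_closure (by simp)

lemma gU_mem (t : ZMod 5) : gU t ∈ SM := by
  have : ∀ t : ZMod 5, ∃ n : Fin 10, (!![4, 3; 0, 4] ^ (n : ℕ) : Matrix (Fin 2) (Fin 2) (ZMod 5))
      = !![1, t; 0, 1] := by decide +kernel
  obtain ⟨n, hn⟩ := this t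
  have h : gU t = gu ^ (n : ℕ) := by
    apply Subtype.ext
    rw [Matrix.SpecialLinearGroup.coe_pow]
    exact hn.symm
  rw [h]; exact pow_mem gu_mem _

lemma gD_mem (t : ZMod 5) (ht : t ≠ 0) : gD t ht ∈ SM := by
  have : ∀ t : ZMod 5, t ≠ 0 →
      ∃ n : Fin 4, (!![2, 0; 0, 3] ^ (n : ℕ) : Matrix (Fin 2) (Fin 2) (ZMod 5))
      = !![t, 0; 0, t * t * t] := by decide +kernel
  obtain ⟨n, hn⟩ := this t ht
  have h : gD t ht = gv ^ (n : ℕ) := by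
    apply Subtype.ext
    rw [Matrix.SpecialLinearGroup.coe_pow]
    exact hn.symm
  rw [h]; exact pow_mem gv_mem _

lemma bruhat1 : ∀ a b d : ZMod 5, a * d = 1 →
    (!![a, 0; 0, a * a * a] * !![1, b * (a * a * a); 0, 1] : Matrix (Fin 2) (Fin 2) (ZMod 5)) =
    !![a, b; 0, d] := by decide +kernel

lemma bruhat2 : ∀ a b c d : ZMod 5, a * d - b * c = 1 → c ≠ 0 →
    (!![1, a * (c * c * c); 0, 1] * (!![0, 1; 4, 0] *
      (!![-c, 0; 0, -c * -c * -c] * !![1, d * (c * c * c); 0, 1])) :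
        Matrix (Fin 2) (Fin 2) (ZMod 5)) =
    !![a, b; c, d] := by decide +kernel

lemma SM_top (x : SL25) : x ∈ SM := by
  have hd := sl_det x
  by_cases hc : x.1 1 0 = 0
  · rw [hc, mul_zero, sub_zero] at hd
    have ha : x.1 0 0 ≠ 0 := by
      intro h; rw [h, zero_mul] at hd; exact absurd hd (by decide)
    have : x = gD _ ha * gU (x.1 0 1 * (x.1 0 0 * x.1 0 0 * x.1 0 0)) := by
      apply Subtype.ext
      refine ((Matrix.eta_fin_two x.1).trans ?_).trans (bruhat1 _ (x.1 0 1) _ hd).symm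
      rw [hc]
    rw [this]
    exact mul_mem (gD_mem _ _) (gU_mem _)
  · have : x = gU (x.1 0 0 * (x.1 1 0 * x.1 1 0 * x.1 1 0)) * (gw *
        (gD (-x.1 1 0) (neg_ne_zero.2 hc) * gU (x.1 1 1 * (x.1 1 0 * x.1 1 0 * x.1 1 0)))) := by
      apply Subtype.ext
      exact (Matrix.eta_fin_two x.1).trans (bruhat2 _ _ _ _ hd hc).symm
    rw [this]
    exact mul_mem (gU_mem _) (mul_mem gw_mem (mul_mem (gD_mem _ _) (gU_mem _)))

lemma fm_mul (g x : SL25) : fm (g * x) = fm g * fm x := by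
  have hg := SM_top g
  induction hg using Submonoid.closure_induction_left generalizing x with
  | one =>
    rw [one_mul, fm_one, one_mul]
  | mul_left y hy z hz ih =>
    have : ∀ x, fm (y * x) = fm y * fm x := by
      rcases hy with rfl | rfl | rfl
      · exact fm_gu
      · exact fm_gv
      · exact fm_gw
    rw [mul_assoc, this, this z, ih, mul_assoc]

lemma fm_inj {x : SL25} (h : fm x = 1) : x = 1 := by
  rw [← fm_one, fm, fm] at h
  have h2 := evM_inj (smul_right_injective _ (inv_ne_zero (by norm_num : (5 : ℂ) ≠ 0)) h)
  obtain ⟨h00, h01, h10, h11⟩ := chk_inj _ _ _ _ (sl_det x) (h2.trans (by decide +kernel))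
  apply Subtype.ext
  ext i j
  fin_cases i <;> fin_cases j <;> simp [h00, h01, h10, h11]

lemma fm_neg_one : fm (-1) = -1 := by
  have h : wG (-1) = ((-5, 0, 0, 0), (0, 0, 0, 0), (0, 0, 0, 0), (-5, 0, 0, 0)) := by
    decide +kernel
  ext i j
  fin_cases i <;> fin_cases j <;> simp [fm, h, evM, ev]

lemma fm_gu_eq : fm gu = alpha := by
  have h : wG gu = ((0, 0, 0, -5), (0, 0, 0, 0), (0, 0, 0, 0), (0, 0, -5, 0)) := by
    decide +kernel
  ext i j
  fin_cases i <;> fin_cases j <;> simp [fm, h, evM, ev, alpha]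

lemma fm_gv_eq : fm gv = beta := by
  have h : wG gv = ((0, 0, 0, 0), (5, 0, 0, 0), (-5, 0, 0, 0), (0, 0, 0, 0)) := by
    decide +kernel
  ext i j
  fin_cases i <;> fin_cases j <;> simp [fm, h, evM, ev, beta]

lemma den_inv : (zeta5 ^ 2 - zeta5 ^ 3)⁻¹ = (5 : ℂ)⁻¹ * ev (-1, -2, -3, 1) := by
  refine inv_eq_of_mul_eq_one_right ?_
  have h4 := zeta5_pow4
  have h5 : zeta5 ^ 5 = 1 := zeta5_prim.pow_eq_one
  have h6 : zeta5 ^ 6 = zeta5 := by rw [pow_succ, h5, one_mul]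
  simp only [ev]
  push_cast
  linear_combination (-1/5 : ℂ) * h4 + (4/5 : ℂ) * h5 - (1/5 : ℂ) * h6

lemma fm_gw_eq : fm gw = gamma := by
  have h : wG gw = (zmul (-1, -2, -3, 1) (-1, 0, -1, -1), (-1, -2, -3, 1), (-1, -2, -3, 1),
      zsc (-1) (zmul (-1, -2, -3, 1) (-1, 0, -1, -1))) := by
    decide +kernel
  have h2 : zeta5 + zeta5⁻¹ = ev (-1, 0, -1, -1) := by
    rw [zeta5_inv]; simp only [ev]; push_cast; ring
  rw [gamma, den_inv, h2]
  ext i j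
  fin_cases i <;> fin_cases j <;> simp [fm, h, evM, ev_mul, ev_sc, mul_assoc]

/-! ### The block-diagonal representation and the group `T` -/

def blk (A : Matrix (Fin 2) (Fin 2) ℂ) (a : ℂ) : Matrix (Fin 3) (Fin 3) ℂ :=
  Matrix.of ![![A 0 0, A 0 1, 0], ![A 1 0, A 1 1, 0], ![0, 0, a]]

lemma blk_mul (A B : Matrix (Fin 2) (Fin 2) ℂ) (a b : ℂ) :
    blk A a * blk B b = blk (A * B) (a * b) := by
  ext i j
  fin_cases i <;> fin_cases j <;>
    simp [blk, Matrix.mul_apply, Fin.sum_univ_three]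

lemma blk_one : blk 1 1 = 1 := by
  ext i j
  fin_cases i <;> fin_cases j <;> simp [blk]

lemma blk_neg_one : blk (-1) (-1) = -1 := by
  ext i j
  fin_cases i <;> fin_cases j <;> simp [blk]

lemma blk_inj {A B : Matrix (Fin 2) (Fin 2) ℂ} {a b : ℂ} (h : blk A a = blk B b) : A = B := by
  have h00 := congrFun (congrFun h 0) 0
  have h01 := congrFun (congrFun h 0) 1
  have h10 := congrFun (congrFun h 1) 0
  have h11 := congrFun (congrFun h 1) 1
  simp [blk] at h00 h01 h10 h11
  ext i j
  fin_cases i <;> fin_cases j <;> simp [h00, h01, h10, h11]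

def FG : SL25 × ℂˣ →* GL (Fin 3) ℂ :=
  MonoidHom.toHomUnits
    { toFun := fun p => blk (fm p.1) (p.2 : ℂ)
      map_one' := by simp [fm_one, blk_one]
      map_mul' := fun p q => by simp [fm_mul, blk_mul] }

lemma FG_coe (p : SL25 × ℂˣ) :
    ((FG p : GL (Fin 3) ℂ) : Matrix (Fin 3) (Fin 3) ℂ) = blk (fm p.1) (p.2 : ℂ) := rfl

def uI : ℂˣ := Units.mk0 Complex.I Complex.I_ne_zero

lemma uI_sq : uI * uI = -1 := by
  ext; simp [uI]

lemma emb_eq (A : Matrix (Fin 2) (Fin 2) ℂ) : emb A = blk A 1 := rfl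

lemma diagI_eq : Matrix.diagonal ![1, 1, Complex.I] = blk 1 Complex.I := by
  ext i j
  fin_cases i <;> fin_cases j <;> simp [blk]

lemma FG_u : ((FG (gu, 1) : GL (Fin 3) ℂ) : Matrix (Fin 3) (Fin 3) ℂ) = alpha' := by
  rw [FG_coe, fm_gu_eq]; rfl
lemma FG_v : ((FG (gv, 1) : GL (Fin 3) ℂ) : Matrix (Fin 3) (Fin 3) ℂ) = beta' := by
  rw [FG_coe, fm_gv_eq]; rfl
lemma FG_w : ((FG (gw, 1) : GL (Fin 3) ℂ) : Matrix (Fin 3) (Fin 3) ℂ) = gamma' := by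
  rw [FG_coe, fm_gw_eq]; rfl
lemma FG_I : ((FG (1, uI) : GL (Fin 3) ℂ) : Matrix (Fin 3) (Fin 3) ℂ) =
    Matrix.diagonal ![1, 1, Complex.I] := by
  rw [FG_coe, fm_one, diagI_eq]; rfl

lemma FG_I_mem : FG (1, uI) ∈ T :=
  (le_sup_right : _ ≤ T) (Subgroup.subset_closure FG_I)

lemma FG_x_mem (x : SL25) : FG (x, 1) ∈ T := by
  refine (le_sup_left : S21 ≤ T) ?_
  have hx := SM_top x
  induction hx using Submonoid.closure_induction with
  | one => exact (show FG 1 ∈ S21 by rw [map_one]; exact one_mem S21)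
  | mem y hy =>
    refine Subgroup.subset_closure ?_
    rcases hy with rfl | rfl | rfl
    · exact Or.inl FG_u
    · exact Or.inr (Or.inl FG_v)
    · exact Or.inr (Or.inr FG_w)
  | mul y z _ _ hy hz =>
    have : FG (y * z, 1) = FG (y, 1) * FG (z, 1) := by
      rw [← map_mul]; simp
    rw [this]
    exact mul_mem hy hz

lemma T_form (t : GL (Fin 3) ℂ) (ht : t ∈ T) :
    ∃ (x : SL25) (a : ℂˣ), a ^ 4 = 1 ∧ FG (x, a) = t := by
  have hle : T ≤ ((⊤ : Subgroup SL25).prod (powMonoidHom 4 : ℂˣ →* ℂˣ).ker).map FG := by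
    refine sup_le ?_ ?_
    · refine (Subgroup.closure_le _).2 ?_
      rintro g (hg | hg | hg)
      · exact ⟨(gu, 1), ⟨trivial, one_mem _⟩, Units.ext (FG_u.trans hg.symm)⟩
      · exact ⟨(gv, 1), ⟨trivial, one_mem _⟩, Units.ext (FG_v.trans hg.symm)⟩
      · exact ⟨(gw, 1), ⟨trivial, one_mem _⟩, Units.ext (FG_w.trans hg.symm)⟩
    · refine (Subgroup.closure_le _).2 ?_
      intro g hg
      refine ⟨(1, uI), ⟨trivial, ?_⟩, Units.ext (FG_I.trans (Eq.symm hg))⟩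
      show uI ^ 4 = 1
      rw [show uI ^ 4 = (uI * uI) * (uI * uI) by rw [← pow_two uI, ← pow_add], uI_sq]; simp
  obtain ⟨⟨x, a⟩, ⟨_, ha⟩, h⟩ := hle ht
  exact ⟨x, a, ha, h⟩

def ent (t : T) : ℂ := ((t : GL (Fin 3) ℂ) : Matrix (Fin 3) (Fin 3) ℂ) 2 2

lemma ent_of {t : T} {x : SL25} {a : ℂˣ} (h : FG (x, a) = t) : ent t = a := by
  rw [ent, ← h, FG_coe]; simp [blk]

lemma ent_mul (s t : T) : ent (s * t) = ent s * ent t := by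
  obtain ⟨x, a, _, hs⟩ := T_form s s.2
  obtain ⟨y, b, _, ht⟩ := T_form t t.2
  have : FG (x * y, a * b) = (s * t : T) := by
    rw [Subgroup.coe_mul, ← hs, ← ht, ← map_mul]; rfl
  rw [ent_of this, ent_of hs, ent_of ht]; simp

lemma ent_one : ent 1 = 1 := by simp [ent]

lemma ent_sq (t : T) : ent t ^ 2 = 1 ∨ ent t ^ 2 = -1 := by
  obtain ⟨x, a, ha, h⟩ := T_form t t.2
  rw [ent_of h]
  have h4 : (a : ℂ) ^ 4 = 1 := by rw [← Units.val_pow_eq_pow_val, ha]; rfl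
  have : ((a : ℂ) ^ 2 - 1) * ((a : ℂ) ^ 2 + 1) = 0 := by linear_combination h4
  rcases mul_eq_zero.1 this with h | h
  · left; linear_combination h
  · right; linear_combination h

open Classical in
def dfun (t : T) : ℤˣ := if ent t ^ 2 = 1 then 1 else -1

lemma dfun_cast (t : T) : ((dfun t : ℤ) : ℂ) = ent t ^ 2 := by
  rw [dfun]
  split_ifs with h
  · simp [h]
  · rw [(ent_sq t).resolve_left h]; simp

lemma units_cast_inj {u v : ℤˣ} (h : ((u : ℤ) : ℂ) = ((v : ℤ) : ℂ)) : u = v := by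
  exact Units.ext (Int.cast_injective h)

def dT : T →* ℤˣ where
  toFun := dfun
  map_one' := units_cast_inj (by rw [dfun_cast, ent_one]; simp)
  map_mul' s t := units_cast_inj (by
    rw [dfun_cast, ent_mul]
    push_cast
    rw [dfun_cast, dfun_cast]; ring)

lemma dT_cast (t : T) : ((dT t : ℤ) : ℂ) = ent t ^ 2 := dfun_cast t

lemma N_form {t : T} (ht : t ∈ N) : t = 1 ∨
    ((t : GL (Fin 3) ℂ) : Matrix (Fin 3) (Fin 3) ℂ) = -1 := by
  induction ht using Subgroup.closure_induction with
  | mem x hx => exact Or.inr hx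
  | one => exact Or.inl rfl
  | mul x y _ _ hx hy =>
    rcases hx with rfl | hx
    · simpa using hy
    · rcases hy with rfl | hy
      · right; simpa using hx
      · left
        refine Subtype.ext (Units.ext ?_)
        simp [hx, hy]
  | inv x _ hx =>
    rcases hx with rfl | hx
    · left; simp
    · right
      have h : x * x = 1 := by
        refine Subtype.ext (Units.ext ?_)
        simp [hx]
      rw [inv_eq_of_mul_eq_one_right h]; exact hx

lemma N_le_ker : N ≤ dT.ker := by
  intro t ht
  rw [MonoidHom.mem_ker]
  rcases N_form ht with rfl | h
  · simp
  · refine units_cast_inj ?_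
    rw [dT_cast, ent, h]; simp

def dQ : Q →* ℤˣ := QuotientGroup.lift N dT N_le_ker

lemma dQ_mk (t : T) : dQ (QuotientGroup.mk t) = dT t := rfl

lemma FG_neg : ((FG (-1, -1) : GL (Fin 3) ℂ) : Matrix (Fin 3) (Fin 3) ℂ) = -1 := by
  rw [FG_coe, fm_neg_one]
  simpa using blk_neg_one

def inlQ : SL25 →* Q where
  toFun x := QuotientGroup.mk ⟨FG (x, 1), FG_x_mem x⟩
  map_one' := by
    rw [← QuotientGroup.mk_one]
    congr 1
    exact Subtype.ext (map_one FG)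
  map_mul' x y := by
    rw [← QuotientGroup.mk_mul]
    congr 1
    refine Subtype.ext ?_
    show FG (x * y, 1) = FG (x, 1) * FG (y, 1)
    rw [← map_mul]; simp

lemma inlQ_inj : Function.Injective inlQ := by
  rw [injective_iff_map_eq_one]
  intro x hx
  have hx' := (QuotientGroup.eq_one_iff _).1 hx
  rcases N_form hx' with h | h
  · have h2 : blk (fm x) 1 = 1 := congrArg (fun t : T => ((t : GL (Fin 3) ℂ) : Matrix (Fin 3) (Fin 3) ℂ)) h
    rw [← blk_one] at h2
    exact fm_inj (blk_inj h2)
  · have h2 : blk (fm x) 1 = -1 := h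
    have h3 := congrFun (congrFun h2 2) 2
    simp [blk] at h3
    exfalso
    norm_num [Complex.ext_iff] at h3

lemma inlQ_range : inlQ.range = dQ.ker := by
  ext q
  constructor
  · rintro ⟨x, rfl⟩
    rw [MonoidHom.mem_ker]
    refine units_cast_inj ?_
    show ((dT _ : ℤ) : ℂ) = _
    rw [dT_cast, ent_of (x := x) (a := 1) rfl]; simp
  · intro hq
    obtain ⟨t, rfl⟩ := QuotientGroup.mk_surjective q
    rw [MonoidHom.mem_ker, dQ_mk] at hq
    obtain ⟨x, a, _, h⟩ := T_form t t.2
    have h1 := dT_cast t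
    rw [hq, ent_of h] at h1
    have h2 : (a : ℂ) ^ 2 = 1 := by simpa using h1.symm
    rcases (by simpa using h2 : (a : ℂ) = 1 ∨ (a : ℂ) = -1) with h3 | h3
    · have h3 : a = 1 := Units.ext h3
      subst h3
      exact ⟨x, congrArg (QuotientGroup.mk : T → Q) (Subtype.ext h)⟩
    · have h3 : a = -1 := Units.ext h3
      subst h3
      refine ⟨-x, ?_⟩
      refine QuotientGroup.eq.2 ?_
      refine Subgroup.subset_closure ?_
      show (((FG (-x, 1))⁻¹ * (t : GL (Fin 3) ℂ) : GL (Fin 3) ℂ) : Matrix (Fin 3) (Fin 3) ℂ) = -1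
      rw [← h, ← map_inv, ← map_mul, ← FG_neg]
      congr 2
      refine Prod.ext ?_ (by simp)
      show (-x)⁻¹ * x = -1
      rw [inv_mul_eq_iff_eq_mul]
      simp

lemma FG_vI_mem : FG (gv, uI) ∈ T := by
  have : FG (gv, uI) = FG (gv, 1) * FG (1, uI) := by rw [← map_mul]; simp
  rw [this]
  exact mul_mem (FG_x_mem _) FG_I_mem

def mT : T := ⟨FG (gv, uI), FG_vI_mem⟩

lemma mT_coe : ((mT : GL (Fin 3) ℂ) : Matrix (Fin 3) (Fin 3) ℂ)
    = Matrix.of ![![0, 1, 0], ![-1, 0, 0], ![0, 0, Complex.I]] := by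
  show blk (fm gv) Complex.I = _
  rw [fm_gv_eq]
  ext i j
  fin_cases i <;> fin_cases j <;> simp [blk, beta]

def mQ : Q := QuotientGroup.mk mT

lemma mQ_sq : mQ * mQ = 1 := by
  refine (QuotientGroup.eq_one_iff (mT * mT)).2 (Subgroup.subset_closure ?_)
  show ((FG (gv, uI) * FG (gv, uI) : GL (Fin 3) ℂ) : Matrix (Fin 3) (Fin 3) ℂ) = -1
  rw [← map_mul, ← FG_neg]
  congr 2
  refine Prod.ext ?_ uI_sq
  show gv * gv = -1
  decide +kernel

lemma dQ_mQ : dQ mQ = -1 := by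
  refine units_cast_inj ?_
  show ((dT mT : ℤ) : ℂ) = _
  rw [dT_cast, ent_of (x := gv) (a := uI) rfl]; simp [uI]

def sQ : ℤˣ →* Q where
  toFun u := if u = 1 then 1 else mQ
  map_one' := by simp
  map_mul' u v := by
    rcases Int.units_eq_one_or u with rfl | rfl <;> rcases Int.units_eq_one_or v with rfl | rfl <;>
      simp [mQ_sq]

lemma sQ_neg : sQ (-1) = mQ := by
  show (if (-1 : ℤˣ) = 1 then 1 else mQ) = mQ
  rw [if_neg (by decide)]

lemma dQ_sQ : dQ.comp sQ = MonoidHom.id ℤˣ := by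
  ext u
  rcases Int.units_eq_one_or u with rfl | rfl
  · simp
  · simp [sQ_neg, dQ_mQ]

lemma dQ_surj : Function.Surjective dQ := fun u => ⟨sQ u, DFunLike.congr_fun dQ_sQ u⟩

def eU : ℤˣ ≃* Multiplicative (ZMod 2) :=
  mulEquivOfPrimeCardEq (p := 2) (by simp) (by simp)

def extQ : GroupExtension SL25 Q (Multiplicative (ZMod 2)) where
  inl := inlQ
  rightHom := eU.toMonoidHom.comp dQ
  inl_injective := inlQ_inj
  range_inl_eq_ker_rightHom := by
    rw [inlQ_range]
    ext q
    simp [MonoidHom.mem_ker]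
  rightHom_surjective := eU.surjective.comp dQ_surj

def splQ : extQ.Splitting where
  toMonoidHom := sQ.comp eU.symm.toMonoidHom
  rightInverse_rightHom := fun u => by
    show eU (dQ (sQ (eU.symm u))) = u
    rw [show dQ (sQ (eU.symm u)) = eU.symm u from DFunLike.congr_fun dQ_sQ _]
    simp

theorem stmt15 :
    ∃ δ : Q →* ℤˣ,
      (∀ t : T, ((δ (QuotientGroup.mk t) : ℤ) : ℂ)
          = (((t : GL (Fin 3) ℂ) : Matrix (Fin 3) (Fin 3) ℂ) 2 2) ^ 2) ∧
      Function.Surjective δ ∧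
      Nonempty (δ.ker ≃* SL25) ∧
      (∃ s : ℤˣ →* Q, δ.comp s = MonoidHom.id ℤˣ ∧
        ∃ m : T, ((m : GL (Fin 3) ℂ) : Matrix (Fin 3) (Fin 3) ℂ)
            = Matrix.of ![![0, 1, 0], ![-1, 0, 0], ![0, 0, Complex.I]] ∧
          s (-1) = QuotientGroup.mk m) ∧
      ∃ φ : Multiplicative (ZMod 2) →* MulAut SL25,
        Nonempty (Q ≃* SL25 ⋊[φ] Multiplicative (ZMod 2)) := by
  refine ⟨dQ, fun t => dT_cast t, dQ_surj, ⟨?_⟩, ⟨sQ, dQ_sQ, mT, mT_coe, sQ_neg⟩,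
    splQ.conjAct, ⟨splQ.semidirectProductMulEquiv.symm⟩⟩
  exact (MulEquiv.subgroupCongr inlQ_range).symm.trans (MonoidHom.ofInjective inlQ_inj).symm
end
end
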